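/- arXiv:2410.13991 — 5 statements merged into one kernel-verified Lean document; each statement's English description precedes it below -/
import Mathlib

section
/- Let c ∈ (0, 1) and let μ_c be the Marchenko–Pastur probability measure with shape c. Then for every real z < 0, ∫ 1/(x − z) dμ_c(x) = (1 − z − c − √((1 − z − c)² − 4cz)) / (2zc). -/
/-!
On `[a, b] = [(1 - √c)², (1 + √c)²]` the integrand is `√((b - x)(x - a)) / (2πc x (x - z))`, and
partial fractions in `x` reduce the claim to `∫ √((b - x)(x - a)) / (x - w) dx` at `w = z` and
`w = 0`. Since `c < 1`, both points lie strictly to the left of `a`, where this integral equals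
`π ((a + b)/2 - w - √((a - w)(b - w)))` (`integral_sqrt_mul_div_sub`); it is computed by the
fundamental theorem of calculus from an explicit antiderivative made of a square root and two
arcsines. The result follows from `a + b = 2(1 + c)` and `ab = (1 - c)²`.
-/

open MeasureTheory

/-- Density of the Marchenko–Pastur distribution with shape `c ∈ (0,1)`:
`f_c(x) = √((λ₊ − x)(x − λ₋)) / (2πcx)` on `[λ₋, λ₊]`, `0` elsewhere,
where `λ± = (1 ± √c)²`. -/
noncomputable def mpDensity (c : ℝ) (x : ℝ) : ℝ :=
  if (1 - Real.sqrt c) ^ 2 ≤ x ∧ x ≤ (1 + Real.sqrt c) ^ 2 then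
    Real.sqrt (((1 + Real.sqrt c) ^ 2 - x) * (x - (1 - Real.sqrt c) ^ 2))
      / (2 * Real.pi * c * x)
  else 0

/-- The Marchenko–Pastur measure with shape `c`. -/
noncomputable def mpMeasure (c : ℝ) : Measure ℝ :=
  volume.withDensity fun x => ENNReal.ofReal (mpDensity c x)

/-- The integral over `[A, B]` follows from the antiderivative
`√((B - y)(y - A)) + (A + B)/2 * arcsin u - √(AB) * arcsin v`, where `u` is affine in `y` and `v`
is a Möbius function of `y`, both increasing from `-1` at `A` to `1` at `B`. -/
lemma integral_sqrt_mul_div (A B : ℝ) (hA : 0 < A) (hAB : A < B) :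
    ∫ y in A..B, √((B - y) * (y - A)) / y = Real.pi * ((A + B) / 2 - √(A * B)) := by
  have hB : 0 < B := hA.trans hAB
  have hd : 0 < B - A := sub_pos.2 hAB
  set s := √(A * B) with hs
  have hs0 : 0 < s := Real.sqrt_pos.2 (mul_pos hA hB)
  have hs2 : s ^ 2 = A * B := Real.sq_sqrt (mul_pos hA hB).le
  let F : ℝ → ℝ := fun y => √((B - y) * (y - A))
    + (A + B) / 2 * Real.arcsin ((2 * y - A - B) / (B - A))
    - s * Real.arcsin (((A + B) * y - 2 * (A * B)) / (y * (B - A)))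
  have hne : ∀ y ∈ Set.Icc A B, y ≠ 0 := fun y hy => (hA.trans_le hy.1).ne'
  have hF : ContinuousOn F (Set.Icc A B) := by
    have h1 : ContinuousOn (fun y : ℝ => ((A + B) * y - 2 * (A * B)) / (y * (B - A)))
        (Set.Icc A B) :=
      ContinuousOn.div (by fun_prop) (by fun_prop) fun y hy => mul_ne_zero (hne y hy) hd.ne'
    have h2 := Real.continuous_arcsin.comp_continuousOn h1
    have h3 : Continuous fun y : ℝ => √((B - y) * (y - A))
        + (A + B) / 2 * Real.arcsin ((2 * y - A - B) / (B - A)) := by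
      have := Real.continuous_arcsin
      fun_prop
    exact h3.continuousOn.sub (continuousOn_const.mul h2)
  have hderiv : ∀ y ∈ Set.Ioo A B, HasDerivAt F (√((B - y) * (y - A)) / y) y := by
    intro y hy
    have hy0 : 0 < y := hA.trans hy.1
    have hQ : 0 < (B - y) * (y - A) := mul_pos (sub_pos.2 hy.2) (sub_pos.2 hy.1)
    set q := √((B - y) * (y - A)) with hq
    have hq0 : 0 < q := Real.sqrt_pos.2 hQ
    have hq2 : q ^ 2 = (B - y) * (y - A) := Real.sq_sqrt hQ.le
    have d1 : HasDerivAt (fun y : ℝ => √((B - y) * (y - A))) ((A + B - 2 * y) / (2 * q)) y := by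
      have := (((hasDerivAt_id y).const_sub B).mul ((hasDerivAt_id y).sub_const A)).sqrt hQ.ne'
      refine this.congr_deriv ?_
      change (-1 * (y - A) + (B - y) * 1) / (2 * q) = _
      ring
    -- `1 - u² = 4Q / (B - A)²`, where `Q = (B - y)(y - A)`
    have e2 : 1 - ((2 * y - A - B) / (B - A)) ^ 2 = (2 * q / (B - A)) ^ 2 := by
      field_simp
      linear_combination (-4) * hq2
    -- `1 - v² = 4ABQ / (y (B - A))²`
    have e3 : 1 - (((A + B) * y - 2 * (A * B)) / (y * (B - A))) ^ 2
        = (2 * s * q / (y * (B - A))) ^ 2 := by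
      field_simp
      linear_combination (-4) * s ^ 2 * hq2 - 4 * (B - y) * (y - A) * hs2
    have p2 : 0 < 2 * q / (B - A) := by positivity
    have p3 : 0 < 2 * s * q / (y * (B - A)) := by positivity
    have d2 : HasDerivAt (fun y : ℝ => Real.arcsin ((2 * y - A - B) / (B - A))) (1 / q) y := by
      have hu : HasDerivAt (fun y : ℝ => (2 * y - A - B) / (B - A)) (2 / (B - A)) y := by
        simpa using ((((hasDerivAt_id y).const_mul 2).sub_const A).sub_const B).div_const (B - A)
      have n1 : (2 * y - A - B) / (B - A) ≠ -1 := fun h => by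
        rw [h] at e2; nlinarith [pow_pos p2 2]
      have n2 : (2 * y - A - B) / (B - A) ≠ 1 := fun h => by
        rw [h] at e2; nlinarith [pow_pos p2 2]
      have := (Real.hasDerivAt_arcsin n1 n2).comp y hu
      rw [e2, Real.sqrt_sq p2.le] at this
      refine this.congr_deriv ?_
      field_simp
    have d3 : HasDerivAt (fun y : ℝ => Real.arcsin (((A + B) * y - 2 * (A * B)) / (y * (B - A))))
        (s / (y * q)) y := by
      have hv : HasDerivAt (fun y : ℝ => ((A + B) * y - 2 * (A * B)) / (y * (B - A)))
          (2 * s ^ 2 / (y ^ 2 * (B - A))) y := by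
        have := (((hasDerivAt_id y).const_mul (A + B)).sub_const (2 * (A * B))).div
          ((hasDerivAt_id y).mul_const (B - A)) (mul_ne_zero hy0.ne' hd.ne')
        refine this.congr_deriv ?_
        simp only [id, hs2]
        field_simp
        ring
      have n1 : ((A + B) * y - 2 * (A * B)) / (y * (B - A)) ≠ -1 := fun h => by
        rw [h] at e3; nlinarith [pow_pos p3 2]
      have n2 : ((A + B) * y - 2 * (A * B)) / (y * (B - A)) ≠ 1 := fun h => by
        rw [h] at e3; nlinarith [pow_pos p3 2]
      have := (Real.hasDerivAt_arcsin n1 n2).comp y hv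
      rw [e3, Real.sqrt_sq p3.le] at this
      refine this.congr_deriv ?_
      field_simp
    have := (d1.add (d2.const_mul ((A + B) / 2))).sub (d3.const_mul s)
    refine this.congr_deriv ?_
    field_simp
    linear_combination (-2) * hq2 - 2 * hs2
  have hint : IntervalIntegrable (fun y => √((B - y) * (y - A)) / y) volume A B := by
    apply ContinuousOn.intervalIntegrable
    rw [Set.uIcc_of_le hAB.le]
    exact ContinuousOn.div (by fun_prop) (by fun_prop) hne
  rw [intervalIntegral.integral_eq_sub_of_hasDerivAt_of_le hAB.le hF hderiv hint]
  have u1 : (2 * B - A - B) / (B - A) = 1 := by field_simp; ring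
  have u2 : (2 * A - A - B) / (B - A) = -1 := by field_simp; ring
  have v1 : ((A + B) * B - 2 * (A * B)) / (B * (B - A)) = 1 := by field_simp; ring
  have v2 : ((A + B) * A - 2 * (A * B)) / (A * (B - A)) = -1 := by field_simp; ring
  simp only [F, u1, u2, v1, v2, Real.arcsin_one, Real.arcsin_neg_one, sub_self, zero_mul, mul_zero,
    Real.sqrt_zero]
  ring

/-- Translate of `integral_sqrt_mul_div`: the Stieltjes transform of the (unnormalised) semicircle
density on `[a, b]` at a real point `w < a`. -/
lemma integral_sqrt_mul_div_sub (a b w : ℝ) (hw : w < a) (hab : a < b) :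
    ∫ x in a..b, √((b - x) * (x - a)) / (x - w)
      = Real.pi * ((a + b) / 2 - w - √((a - w) * (b - w))) := by
  have h := integral_sqrt_mul_div (a - w) (b - w) (sub_pos.2 hw) (by linarith)
  rw [← intervalIntegral.integral_comp_sub_right
    (fun y => √((b - w - y) * (y - (a - w))) / y) w] at h
  calc _ = _ := by
        refine intervalIntegral.integral_congr fun x _ => ?_
        simp only [sub_sub_sub_cancel_right]
    _ = _ := h
    _ = _ := by ring

lemma mpDensity_nonneg (c : ℝ) (hc : 0 < c) (x : ℝ) : 0 ≤ mpDensity c x := by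
  unfold mpDensity
  split_ifs with h
  · have : 0 ≤ x := (sq_nonneg _).trans h.1
    positivity
  · exact le_rfl

lemma measurable_mpDensity (c : ℝ) : Measurable (mpDensity c) := by
  unfold mpDensity
  refine Measurable.ite measurableSet_Icc ?_ measurable_const
  fun_prop

lemma integral_mpMeasure (c : ℝ) (hc : 0 < c) (g : ℝ → ℝ) :
    ∫ x, g x ∂(mpMeasure c) = ∫ x in (1 - √c) ^ 2..(1 + √c) ^ 2,
      √(((1 + √c) ^ 2 - x) * (x - (1 - √c) ^ 2)) / (2 * Real.pi * c * x) * g x := by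
  have hle : (1 - √c) ^ 2 ≤ (1 + √c) ^ 2 := by nlinarith [Real.sqrt_nonneg c]
  rw [mpMeasure, integral_withDensity_eq_integral_toReal_smul
    (measurable_mpDensity c).ennreal_ofReal (by simp),
    intervalIntegral.integral_of_le hle, ← integral_Icc_eq_integral_Ioc,
    ← integral_indicator measurableSet_Icc]
  congr 1
  ext x
  rw [ENNReal.toReal_ofReal (mpDensity_nonneg c hc x), smul_eq_mul]
  simp only [mpDensity, Set.indicator, Set.mem_Icc, ite_mul, zero_mul]

/-- **Closed form of the Marchenko–Pastur Stieltjes transform.** For `c ∈ (0,1)` and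
`z < 0`, `∫ 1/(x − z) dμ_c(x) = (1 − z − c − √((1 − z − c)² − 4cz)) / (2zc)`. -/
theorem mp_stieltjes_transform (c : ℝ) (hc : c ∈ Set.Ioo (0 : ℝ) 1)
    (z : ℝ) (hz : z < 0) :
    ∫ x, (x - z)⁻¹ ∂(mpMeasure c)
      = (1 - z - c - Real.sqrt ((1 - z - c) ^ 2 - 4 * c * z)) / (2 * z * c) := by
  obtain ⟨hc0, hc1⟩ := hc
  have hs0 : 0 < √c := Real.sqrt_pos.2 hc0
  have hs2 : √c ^ 2 = c := Real.sq_sqrt hc0.le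
  have hs1 : √c < 1 := by rw [Real.sqrt_lt' one_pos]; linarith
  rw [integral_mpMeasure c hc0]
  set a := (1 - √c) ^ 2 with ha
  set b := (1 + √c) ^ 2 with hb
  have ha0 : 0 < a := pow_pos (sub_pos.2 hs1) 2
  have hab : a < b := by nlinarith
  have hsum : a + b = 2 * (1 + c) := by rw [ha, hb]; linear_combination 2 * hs2
  have hprod : a * b = (1 - c) ^ 2 := by
    rw [ha, hb, ← mul_pow]; congr 1; linear_combination -hs2
  have hcont : ∀ w < a, IntervalIntegrable
      (fun x => √((b - x) * (x - a)) / (x - w)) volume a b := fun w hw => by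
    apply ContinuousOn.intervalIntegrable
    rw [Set.uIcc_of_le hab.le]
    refine ContinuousOn.div (by fun_prop) (by fun_prop) fun x hx => ?_
    exact (sub_pos.2 (hw.trans_le hx.1)).ne'
  -- partial fractions: `1 / (x (x - z)) = (1 / (x - z) - 1 / x) / z`
  have hpf : ∫ x in a..b, √((b - x) * (x - a)) / (2 * Real.pi * c * x) * (x - z)⁻¹
      = ∫ x in a..b, (2 * Real.pi * c * z)⁻¹ *
        (√((b - x) * (x - a)) / (x - z) - √((b - x) * (x - a)) / (x - 0)) := by
    refine intervalIntegral.integral_congr fun x hx => ?_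
    rw [Set.uIcc_of_le hab.le] at hx
    have hx0 : x ≠ 0 := (ha0.trans_le hx.1).ne'
    have hxz : x - z ≠ 0 := (sub_pos.2 ((hz.trans ha0).trans_le hx.1)).ne'
    have := hz.ne
    simp only [sub_zero]
    field_simp
    ring
  rw [hpf, intervalIntegral.integral_const_mul,
    intervalIntegral.integral_sub (hcont z (hz.trans ha0)) (hcont 0 ha0),
    integral_sqrt_mul_div_sub a b z (hz.trans ha0) hab, integral_sqrt_mul_div_sub a b 0 ha0 hab]
  have hdisc : (a - z) * (b - z) = (1 - z - c) ^ 2 - 4 * c * z := by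
    linear_combination hprod - z * hsum
  rw [hdisc, sub_zero, sub_zero, sub_zero, hprod, Real.sqrt_sq (by linarith), hsum]
  have := hz.ne
  field_simp
  ring
end

section
/- Let d, n be positive integers, μ ∈ ℝ with μ ≠ 0, and let u ∈ ℝ^d and v ∈ ℝⁿ be fixed vectors. Let A be a random d×n real matrix whose distribution is rotationally bi-invariant, meaning that for every orthogonal U ∈ O(d) and every orthogonal W ∈ O(n), the matrix U A W has the same distribution as A. Assume the scalar uᵀ(A Aᵀ + μ² I_d)⁻² A v is integrable. Then E[uᵀ (A Aᵀ + μ² I_d)⁻² A v] = 0. Equivalently, with Â = [A μI_d], Â† its Moore–Penrose pseudoinverse, v̂ = (v,0) ∈ ℝ^{n+d}, k̂ = Â†u and ĥ = v̂ᵀÂ†, one has E[k̂ᵀ Â† ĥᵀ] = 0. -/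
/-!
The map `A ↦ uᵀ(AAᵀ + μ²I)⁻²Av` is odd, because `AAᵀ` is even in `A`. Bi-invariance with
`U = -I` and `W = I` says that `-A` has the same distribution as `A`, so the expectation equals
its own negative. The transfer to the distribution of `A` needs this map to be measurable
(`measurable_resolventForm`), which follows from Cramer's formula for the inverse.
-/

open MeasureTheory ProbabilityTheory Matrix

/-- Matrices carry the product measurable structure (entrywise). -/
instance matrixMeasurableSpace {m n α : Type*} [MeasurableSpace α] :
    MeasurableSpace (Matrix m n α) :=
  MeasurableSpace.pi

/-- The scalar `uᵀ(BBᵀ + c I)⁻²Bv` as a function of the matrix `B`. -/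
noncomputable def resolventForm {d n : ℕ} (c : ℝ) (u : Fin d → ℝ) (v : Fin n → ℝ)
    (B : Matrix (Fin d) (Fin n) ℝ) : ℝ :=
  u ⬝ᵥ (((B * Bᵀ + c • (1 : Matrix (Fin d) (Fin d) ℝ))⁻¹
    * (B * Bᵀ + c • (1 : Matrix (Fin d) (Fin d) ℝ))⁻¹ * B) *ᵥ v)

lemma resolventForm_neg {d n : ℕ} (c : ℝ) (u : Fin d → ℝ) (v : Fin n → ℝ)
    (B : Matrix (Fin d) (Fin n) ℝ) :
    resolventForm c u v (-B) = -resolventForm c u v B := by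
  simp [resolventForm, Matrix.neg_mulVec]

/-- The inverse is the adjugate, which is continuous in `B`, divided by the determinant. -/
lemma measurable_resolventForm {d n : ℕ} (c : ℝ) (u : Fin d → ℝ) (v : Fin n → ℝ) :
    Measurable (resolventForm (d := d) (n := n) c u v) := by
  have : BorelSpace (Matrix (Fin d) (Fin n) ℝ) :=
    inferInstanceAs (BorelSpace (Fin d → Fin n → ℝ))
  have hM : Continuous fun B : Matrix (Fin d) (Fin n) ℝ =>
      B * Bᵀ + c • (1 : Matrix (Fin d) (Fin d) ℝ) :=
    (continuous_id.matrix_mul continuous_id.matrix_transpose).add continuous_const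
  have hadj := hM.matrix_adjugate
  have hnum := (continuous_const (y := u)).dotProduct
    (((hadj.matrix_mul hadj).matrix_mul continuous_id).matrix_mulVec (continuous_const (y := v)))
  have hdet := hM.matrix_det.measurable.inv
  convert (hdet.mul hdet).mul hnum.measurable using 1
  ext B
  simp [resolventForm, Matrix.inv_def, Ring.inverse_eq_inv', Matrix.smul_mulVec, mul_assoc]

/-- **Zero expectation for rotationally bi-invariant noise.** If the distribution of
the random matrix `A` is invariant under `A ↦ UAW` for all orthogonal `U, W`, then
`E[uᵀ(AAᵀ + μ²I)⁻²Av] = 0` (equivalently, `E[k̂ᵀÂ†ĥᵀ] = 0`). -/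
theorem zero_expectation_bi_invariant
    {Ω : Type*} [MeasureSpace Ω] [IsProbabilityMeasure (ℙ : Measure Ω)]
    (d n : ℕ) (hd : 0 < d) (hn : 0 < n) (μ : ℝ) (hμ : μ ≠ 0)
    (u : Fin d → ℝ) (v : Fin n → ℝ)
    (A : Ω → Matrix (Fin d) (Fin n) ℝ) (hAmeas : Measurable A)
    (hbiinv : ∀ U : Matrix (Fin d) (Fin d) ℝ, Uᵀ * U = 1 →
      ∀ W : Matrix (Fin n) (Fin n) ℝ, Wᵀ * W = 1 →
        Measure.map (fun ω => U * A ω * W) ℙ = Measure.map A ℙ)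
    (hint : Integrable (fun ω =>
      u ⬝ᵥ (((A ω * (A ω)ᵀ + μ ^ 2 • (1 : Matrix (Fin d) (Fin d) ℝ))⁻¹
        * (A ω * (A ω)ᵀ + μ ^ 2 • (1 : Matrix (Fin d) (Fin d) ℝ))⁻¹ * A ω) *ᵥ v))) :
    ∫ ω, u ⬝ᵥ (((A ω * (A ω)ᵀ + μ ^ 2 • (1 : Matrix (Fin d) (Fin d) ℝ))⁻¹
        * (A ω * (A ω)ᵀ + μ ^ 2 • (1 : Matrix (Fin d) (Fin d) ℝ))⁻¹ * A ω) *ᵥ v)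
      = 0 := by
  have hg := measurable_resolventForm (μ ^ 2) u v
  have hmap : Measure.map (fun ω => -A ω) ℙ = Measure.map A ℙ := by
    simpa using hbiinv (-1) (by simp) 1 (by simp)
  have hneg : Measurable fun ω => -A ω :=
    measurable_pi_lambda _ fun i => measurable_pi_lambda _ fun j =>
      ((measurable_pi_apply j).comp ((measurable_pi_apply i).comp hAmeas)).neg
  change ∫ ω, resolventForm (μ ^ 2) u v (A ω) = 0
  have key : ∫ ω, resolventForm (μ ^ 2) u v (A ω) = -∫ ω, resolventForm (μ ^ 2) u v (A ω) :=
    calc ∫ ω, resolventForm (μ ^ 2) u v (A ω)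
        = ∫ B, resolventForm (μ ^ 2) u v B ∂(Measure.map A ℙ) :=
          (integral_map hAmeas.aemeasurable hg.aestronglyMeasurable).symm
      _ = ∫ B, resolventForm (μ ^ 2) u v B ∂(Measure.map (fun ω => -A ω) ℙ) := by rw [hmap]
      _ = ∫ ω, resolventForm (μ ^ 2) u v (-A ω) :=
          integral_map hneg.aemeasurable hg.aestronglyMeasurable
      _ = -∫ ω, resolventForm (μ ^ 2) u v (A ω) := by
          simp only [resolventForm_neg, integral_neg]
  linarith
end

section
/- Let d, n be positive integers, μ ∈ ℝ with μ ≠ 0, and let u ∈ ℝ^d, v ∈ ℝⁿ and ε ∈ ℝⁿ be fixed vectors. Let A be a random d×n real matrix whose distribution is rotationally bi-invariant, meaning that for every orthogonal U ∈ O(d) and every orthogonal W ∈ O(n), the matrix U A W has the same distribution as A. Write M = A Aᵀ + μ² I_d, and assume all three scalars below are integrable. Then: (i) E[(εᵀ Aᵀ M⁻¹ u) · (vᵀ(I_n − Aᵀ M⁻¹ A) ε)] = 0; (ii) E[(εᵀ Aᵀ M⁻² u) · (vᵀ(I_n − Aᵀ M⁻¹ A) ε)] = 0; (iii) E[(εᵀ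 Aᵀ M⁻² A v) · (uᵀ M⁻¹ A ε)] = 0. Equivalently, with Â = [A μI_d], Â† = Âᵀ M⁻¹ its Moore–Penrose pseudoinverse, ε̂ = (ε,0), v̂ = (v,0), k̂ = Â†u, ĥ = v̂ᵀÂ†, t̂ = v̂ᵀ(I − Â†Â): E[ε̂ᵀ k̂ · t̂ ε̂] = 0, E[ε̂ᵀ Â† Â†ᵀ k̂ · t̂ ε̂] = 0, and E[(ε̂ᵀ Â† ĥᵀ)(k̂ᵀ ε̂)] = 0. -/
/-!
Under `A ↦ -A` the matrix `M = AAᵀ + μ²I` is unchanged, and every term of the three integrands has an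
odd number of further factors `A`, so each is an odd function of `A`. Bi-invariance with `U = -I`,
`W = I` says that `-A` and `A` have the same law, so each expectation equals its own negative
(`integral_odd_eq_zero`). Transferring the integral to the law of `A` requires the integrands to be
measurable functions of the matrix; the only nontrivial ingredient there is the matrix inverse,
which is `(det)⁻¹ • adjugate` (`measurable_matrix_inv`).
-/

open MeasureTheory ProbabilityTheory Matrix

section Measurability

variable {X l m k : Type*} [MeasurableSpace X]

lemma measurable_matrix_entry {f : X → Matrix l m ℝ} (hf : Measurable f) (i : l) (j : m) :
    Measurable fun x => f x i j :=
  (measurable_pi_apply j).comp ((measurable_pi_apply i).comp hf)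

lemma measurable_matrix_of_entry {f : X → Matrix l m ℝ}
    (hf : ∀ i j, Measurable fun x => f x i j) : Measurable f :=
  measurable_pi_lambda _ fun i => measurable_pi_lambda _ fun j => hf i j

lemma measurable_matrix_transpose {f : X → Matrix l m ℝ} (hf : Measurable f) :
    Measurable fun x => (f x)ᵀ :=
  measurable_matrix_of_entry fun i j => measurable_matrix_entry hf j i

lemma measurable_matrix_mul [Fintype m] {f : X → Matrix l m ℝ} {g : X → Matrix m k ℝ}
    (hf : Measurable f) (hg : Measurable g) : Measurable fun x => f x * g x := by
  refine measurable_matrix_of_entry fun i j => ?_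
  simp only [Matrix.mul_apply]
  exact Finset.measurable_fun_sum _ fun a _ =>
    (measurable_matrix_entry hf i a).mul (measurable_matrix_entry hg a j)

lemma measurable_matrix_det [Fintype m] [DecidableEq m] {f : X → Matrix m m ℝ}
    (hf : Measurable f) : Measurable fun x => (f x).det := by
  simp only [Matrix.det_apply']
  exact Finset.measurable_fun_sum _ fun σ _ => measurable_const.mul
    (Finset.measurable_fun_prod _ fun a _ => measurable_matrix_entry hf _ _)

/-- Matrix inversion, with its junk value `0` on singular matrices, is Borel measurable: the
entries of the adjugate are determinants of matrices with one row replaced by a constant one. -/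
lemma measurable_matrix_inv [Fintype m] [DecidableEq m] {f : X → Matrix m m ℝ}
    (hf : Measurable f) : Measurable fun x => (f x)⁻¹ := by
  refine measurable_matrix_of_entry fun i j => ?_
  simp only [Matrix.inv_def, Matrix.smul_apply, smul_eq_mul, Ring.inverse_eq_inv',
    Matrix.adjugate_apply]
  refine (measurable_matrix_det hf).inv.mul (measurable_matrix_det ?_)
  refine measurable_matrix_of_entry fun a b => ?_
  by_cases h : a = j
  · subst h
    simp
  · simpa [Matrix.updateRow_ne h] using measurable_matrix_entry hf a b

lemma measurable_bilinear_form [Fintype l] [Fintype m] {f : X → Matrix l m ℝ}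
    (hf : Measurable f) (a : l → ℝ) (b : m → ℝ) : Measurable fun x => a ⬝ᵥ (f x *ᵥ b) := by
  simp only [Matrix.mulVec, dotProduct]
  exact Finset.measurable_fun_sum _ fun i _ => measurable_const.mul
    (Finset.measurable_fun_sum _ fun j _ => (measurable_matrix_entry hf i j).mul measurable_const)

lemma measurable_matrix_const_sub {f : X → Matrix l m ℝ} (hf : Measurable f) (C : Matrix l m ℝ) :
    Measurable fun x => C - f x :=
  measurable_matrix_of_entry fun i j => measurable_const.sub (measurable_matrix_entry hf i j)

lemma measurable_matrix_add_const {f : X → Matrix l m ℝ} (hf : Measurable f) (C : Matrix l m ℝ) :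
    Measurable fun x => f x + C :=
  measurable_matrix_of_entry fun i j => (measurable_matrix_entry hf i j).add measurable_const

end Measurability

/-- An odd function of a random matrix with symmetric law has zero integral. No integrability is
needed, since the Bochner integral of a non-integrable function is `0`. -/
lemma integral_odd_eq_zero {Ω m n : Type*} [MeasurableSpace Ω] {P : Measure Ω}
    {A : Ω → Matrix m n ℝ} (hA : Measurable A)
    (hsymm : Measure.map (fun ω => -A ω) P = Measure.map A P)
    {F : Matrix m n ℝ → ℝ} (hF : Measurable F) (hodd : ∀ B, F (-B) = -F B) :
    ∫ ω, F (A ω) ∂P = 0 := by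
  have hneg : Measurable fun ω => -A ω :=
    measurable_matrix_of_entry fun i j => (measurable_matrix_entry hA i j).neg
  have h₁ := integral_map hA.aemeasurable
    (hF.aestronglyMeasurable (μ := Measure.map A P))
  have h₂ := integral_map hneg.aemeasurable
    (hF.aestronglyMeasurable (μ := Measure.map (fun ω => -A ω) P))
  rw [hsymm, h₁] at h₂
  simp only [hodd, integral_neg] at h₂
  linarith

/-- **Zero-expectation cross terms for rotationally bi-invariant noise.** With
`M = AAᵀ + μ²I` and `A` rotationally bi-invariant in distribution:
(i) `E[(εᵀAᵀM⁻¹u)(vᵀ(I − AᵀM⁻¹A)ε)] = 0`;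
(ii) `E[(εᵀAᵀM⁻²u)(vᵀ(I − AᵀM⁻¹A)ε)] = 0`;
(iii) `E[(εᵀAᵀM⁻²Av)(uᵀM⁻¹Aε)] = 0`. -/
theorem zero_expectation_cross_terms_bi_invariant
    {Ω : Type*} [MeasureSpace Ω] [IsProbabilityMeasure (ℙ : Measure Ω)]
    (d n : ℕ) (hd : 0 < d) (hn : 0 < n) (μ : ℝ) (hμ : μ ≠ 0)
    (u : Fin d → ℝ) (v ε : Fin n → ℝ)
    (A : Ω → Matrix (Fin d) (Fin n) ℝ) (hAmeas : Measurable A)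
    (hbiinv : ∀ U : Matrix (Fin d) (Fin d) ℝ, Uᵀ * U = 1 →
      ∀ W : Matrix (Fin n) (Fin n) ℝ, Wᵀ * W = 1 →
        Measure.map (fun ω => U * A ω * W) ℙ = Measure.map A ℙ)
    (M : Ω → Matrix (Fin d) (Fin d) ℝ)
    (hM : M = fun ω => A ω * (A ω)ᵀ + μ ^ 2 • (1 : Matrix (Fin d) (Fin d) ℝ))
    (hint₁ : Integrable (fun ω =>
      (ε ⬝ᵥ (((A ω)ᵀ * (M ω)⁻¹) *ᵥ u))
        * (v ⬝ᵥ (((1 : Matrix (Fin n) (Fin n) ℝ) - (A ω)ᵀ * (M ω)⁻¹ * A ω) *ᵥ ε))))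
    (hint₂ : Integrable (fun ω =>
      (ε ⬝ᵥ (((A ω)ᵀ * ((M ω)⁻¹ * (M ω)⁻¹)) *ᵥ u))
        * (v ⬝ᵥ (((1 : Matrix (Fin n) (Fin n) ℝ) - (A ω)ᵀ * (M ω)⁻¹ * A ω) *ᵥ ε))))
    (hint₃ : Integrable (fun ω =>
      (ε ⬝ᵥ (((A ω)ᵀ * ((M ω)⁻¹ * (M ω)⁻¹) * A ω) *ᵥ v))
        * (u ⬝ᵥ (((M ω)⁻¹ * A ω) *ᵥ ε)))) :
    (∫ ω, (ε ⬝ᵥ (((A ω)ᵀ * (M ω)⁻¹) *ᵥ u))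
        * (v ⬝ᵥ (((1 : Matrix (Fin n) (Fin n) ℝ) - (A ω)ᵀ * (M ω)⁻¹ * A ω) *ᵥ ε)) = 0)
      ∧ (∫ ω, (ε ⬝ᵥ (((A ω)ᵀ * ((M ω)⁻¹ * (M ω)⁻¹)) *ᵥ u))
          * (v ⬝ᵥ (((1 : Matrix (Fin n) (Fin n) ℝ) - (A ω)ᵀ * (M ω)⁻¹ * A ω) *ᵥ ε)) = 0)
      ∧ (∫ ω, (ε ⬝ᵥ (((A ω)ᵀ * ((M ω)⁻¹ * (M ω)⁻¹) * A ω) *ᵥ v))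
          * (u ⬝ᵥ (((M ω)⁻¹ * A ω) *ᵥ ε)) = 0) := by
  have hsymm : Measure.map (fun ω => -A ω) ℙ = Measure.map A ℙ := by
    simpa using hbiinv (-1) (by simp) 1 (by simp)
  subst hM
  have hid : Measurable fun B : Matrix (Fin d) (Fin n) ℝ => B := measurable_id
  have hT := measurable_matrix_transpose hid
  have hMinv := measurable_matrix_inv (measurable_matrix_add_const
    (measurable_matrix_mul hid hT) (μ ^ 2 • (1 : Matrix (Fin d) (Fin d) ℝ)))
  have hMinv2 := measurable_matrix_mul hMinv hMinv
  have hproj := measurable_bilinear_form (measurable_matrix_const_sub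
    (measurable_matrix_mul (measurable_matrix_mul hT hMinv) hid) 1) v ε
  refine ⟨?_, ?_, ?_⟩
  · exact integral_odd_eq_zero hAmeas hsymm
      ((measurable_bilinear_form (measurable_matrix_mul hT hMinv) ε u).mul hproj)
      fun B => by simp [Matrix.neg_mulVec]
  · exact integral_odd_eq_zero hAmeas hsymm
      ((measurable_bilinear_form (measurable_matrix_mul hT hMinv2) ε u).mul hproj)
      fun B => by simp [Matrix.neg_mulVec]
  · exact integral_odd_eq_zero hAmeas hsymm
      ((measurable_bilinear_form (measurable_matrix_mul (measurable_matrix_mul hT hMinv2) hid)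
        ε v).mul (measurable_bilinear_form (measurable_matrix_mul hMinv hid) u ε))
      fun B => by simp [Matrix.neg_mulVec]
end

section
/- Let d, n, m be positive integers, A ∈ ℝ^{d×n}, θ, θ' ∈ ℝ, u ∈ ℝ^d, v ∈ ℝⁿ, v_tst ∈ ℝ^m. Let A† be the Moore–Penrose pseudoinverse of A and assume A A† = I_d (A has full row rank). Define h = vᵀA† ∈ ℝ^{1×d}, k = A†u ∈ ℝⁿ, t = vᵀ(I_n − A†A) ∈ ℝ^{1×n}, ξ = 1 + θ vᵀA†u, γ₁ = θ²‖t‖²‖k‖² + ξ², p₁ = −(θ²‖k‖²/ξ) tᵀ − θ k, q₁ᵀ = −(θ‖t‖²/ξ) kᵀA† − h, and assume ξ ≠ 0 and γ₁ ≠ 0. Set Z_tst = θ' u v_tstᵀ ∈ ℝ^{d×m} and P = A† + (θ/ξ) tᵀ kᵀ A† − (ξ/γ₁) p₁ q₁ᵀ ∈ ℝ^{n×d}. Then for every β* ∈ ℝ^d, β*ᵀ A P Z_tst = (ξ/γ₁) β*ᵀ Z_tst. -/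
/-!
Since `I - A†A` is symmetric and `A A† A = A`, the vector `t` is killed by `A`; full row rank
gives `A k = u`, hence `A p₁ = -θ u`. The definitions of `ξ` and `γ₁` give
`θ q₁ᵀu = 1 - γ₁/ξ`, so `A P u = u + (ξ/γ₁)(1 - γ₁/ξ) u = (ξ/γ₁) u`. The columns of `Z_tst` are
multiples of `u`, so `A P Z_tst = (ξ/γ₁) Z_tst`.
-/

open Matrix

/-- **Signal-plus-noise bias cancellation, underparameterized regime.** With
`P = (θuvᵀ + A)†` written via Meyer's rank-one update and `A A† = I` (full row rank),
`β*ᵀ A P Z_tst = (ξ/γ₁) β*ᵀ Z_tst` for `Z_tst = θ'uv_tstᵀ`. -/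
theorem spn_bias_cancellation_underparam
    (d n m : ℕ) (hd : 0 < d) (hn : 0 < n) (hm : 0 < m)
    (θ θ' : ℝ)
    (A : Matrix (Fin d) (Fin n) ℝ) (u : Fin d → ℝ) (v : Fin n → ℝ)
    (vtst : Fin m → ℝ)
    (Adag : Matrix (Fin n) (Fin d) ℝ)
    (hp1 : A * Adag * A = A)
    (hp2 : Adag * A * Adag = Adag)
    (hp3 : (A * Adag)ᵀ = A * Adag)
    (hp4 : (Adag * A)ᵀ = Adag * A)
    (hfullrow : A * Adag = 1)
    (h : Fin d → ℝ) (hh : h = v ᵥ* Adag)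
    (k : Fin n → ℝ) (hk : k = Adag *ᵥ u)
    (t : Fin n → ℝ) (ht : t = v ᵥ* ((1 : Matrix (Fin n) (Fin n) ℝ) - Adag * A))
    (ξ : ℝ) (hξdef : ξ = 1 + θ * (v ⬝ᵥ (Adag *ᵥ u)))
    (γ₁ : ℝ) (hγdef : γ₁ = θ ^ 2 * (t ⬝ᵥ t) * (k ⬝ᵥ k) + ξ ^ 2)
    (p₁ : Fin n → ℝ) (hp₁ : p₁ = -(θ ^ 2 * (k ⬝ᵥ k) / ξ) • t - θ • k)
    (q₁ : Fin d → ℝ) (hq₁ : q₁ = -(θ * (t ⬝ᵥ t) / ξ) • (k ᵥ* Adag) - h)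
    (hξ : ξ ≠ 0) (hγ : γ₁ ≠ 0)
    (Ztst : Matrix (Fin d) (Fin m) ℝ) (hZtst : Ztst = θ' • vecMulVec u vtst)
    (P : Matrix (Fin n) (Fin d) ℝ)
    (hP : P = Adag + (θ / ξ) • vecMulVec t (k ᵥ* Adag) - (ξ / γ₁) • vecMulVec p₁ q₁) :
    ∀ βstar : Fin d → ℝ,
      βstar ᵥ* (A * P * Ztst) = (ξ / γ₁) • (βstar ᵥ* Ztst) := by
  have hAt : A *ᵥ t = 0 := by
    -- `I - A†A` is symmetric, so `t` is also its image of the column vector `v`.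
    have hsymm : ((1 : Matrix (Fin n) (Fin n) ℝ) - Adag * A)ᵀ = 1 - Adag * A := by
      rw [transpose_sub, transpose_one, hp4]
    rw [ht, ← mulVec_transpose, hsymm, mulVec_mulVec, Matrix.mul_sub, Matrix.mul_one,
      ← Matrix.mul_assoc, hp1, sub_self, zero_mulVec]
  have hAk : A *ᵥ k = u := by
    rw [hk, mulVec_mulVec, hfullrow, one_mulVec]
  have hkAu : (k ᵥ* Adag) ⬝ᵥ u = k ⬝ᵥ k := by
    rw [← dotProduct_mulVec, ← hk]
  have hhu : θ * (h ⬝ᵥ u) = ξ - 1 := by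
    rw [hh, ← dotProduct_mulVec, hξdef]
    ring
  have hAp : A *ᵥ p₁ = -(θ • u) := by
    rw [hp₁, mulVec_sub, mulVec_smul, mulVec_smul, hAt, hAk, smul_zero, zero_sub]
  have hqu : θ * (q₁ ⬝ᵥ u) = 1 - γ₁ / ξ := by
    have hq : q₁ ⬝ᵥ u = -(θ * (t ⬝ᵥ t) / ξ) * (k ⬝ᵥ k) - h ⬝ᵥ u := by
      rw [hq₁, sub_dotProduct, smul_dotProduct, hkAu, smul_eq_mul]
    rw [hq, mul_sub, hhu, hγdef]
    field_simp
    ring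
  have hAPu : A *ᵥ (P *ᵥ u) = (ξ / γ₁) • u := by
    have hPu : P *ᵥ u = k + ((θ / ξ) * (k ⬝ᵥ k)) • t - ((ξ / γ₁) * (q₁ ⬝ᵥ u)) • p₁ := by
      rw [hP, sub_mulVec, add_mulVec, smul_mulVec, smul_mulVec, vecMulVec_mulVec,
        vecMulVec_mulVec, hkAu, ← hk, op_smul_eq_smul, op_smul_eq_smul, smul_smul, smul_smul]
    rw [hPu, mulVec_sub, mulVec_add, mulVec_smul, mulVec_smul, hAt, hAk, hAp, smul_zero,
      add_zero, smul_neg, sub_neg_eq_add, smul_smul, mul_assoc, mul_comm _ θ, hqu]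
    have hcoef : 1 + ξ / γ₁ * (1 - γ₁ / ξ) = ξ / γ₁ := by
      field_simp
      ring
    rw [← hcoef, add_smul, one_smul, hcoef]
  intro βstar
  have hAPZ : A * P * Ztst = (ξ / γ₁) • Ztst := by
    rw [hZtst, Matrix.mul_smul, mul_vecMulVec, ← mulVec_mulVec, hAPu, smul_vecMulVec,
      smul_comm]
  rw [hAPZ, vecMul_smul]
end

section
/- Let d, n, m be positive integers, A ∈ ℝ^{d×n}, θ ∈ ℝ with θ ≠ 0, θ' ∈ ℝ, u ∈ ℝ^d, v ∈ ℝⁿ, v_tst ∈ ℝ^m. Let A† be the Moore–Penrose pseudoinverse of A. Define h = vᵀA† ∈ ℝ^{1×d}, k = A†u ∈ ℝⁿ, s = (I_d − A A†)u ∈ ℝ^d, ξ = 1 + θ vᵀA†u, γ₂ = θ²‖s‖²‖h‖² + ξ², p₂ = −(θ²‖s‖²/ξ) A† hᵀ − θ k ∈ ℝⁿ, and q₂ᵀ = −(θ‖h‖²/ξ) sᵀ − h ∈ ℝ^{1×d} (with sᵀ ∈ ℝ^{1×d} and h ∈ ℝ^{1×d}). Assume ξ ≠ 0 and γ₂ ≠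 0. Set Z_tst = θ' u v_tstᵀ ∈ ℝ^{d×m} and P = A† + (θ/ξ) A† hᵀ sᵀ − (ξ/γ₂) p₂ q₂ᵀ ∈ ℝ^{n×d}. Then for every β* ∈ ℝ^d, β*ᵀ A P Z_tst = −(θ' ξ/(θ γ₂)) β*ᵀ A p₂ v_tstᵀ. -/
open Matrix

/-!
Everything reduces to `P u = -(ξ / (θ γ₂)) p₂`, since `Z_tst = θ' u v_tstᵀ`.
As `sᵀu = ‖s‖²` (`I - A A†` is an orthogonal projection), the first two terms of `P u` add up to
`A†u + (θ‖s‖²/ξ) A†hᵀ = -p₂ / θ`. As `h u = vᵀA†u = (ξ - 1)/θ`, one has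
`ξ q₂ᵀu = -(γ₂ - ξ)/θ`, so the last term is `((γ₂ - ξ)/(θ γ₂)) p₂`.
-/

/-- The residual of a vector under an orthogonal projection `M` satisfies `sᵀu = ‖s‖²`. -/
lemma residual_dotProduct_self {d : ℕ} (M : Matrix (Fin d) (Fin d) ℝ)
    (hsymm : Mᵀ = M) (hidem : M * M = M) (u : Fin d → ℝ) :
    ((1 - M) *ᵥ u) ⬝ᵥ u = ((1 - M) *ᵥ u) ⬝ᵥ ((1 - M) *ᵥ u) := by
  have hT : (1 - M)ᵀ = 1 - M := by rw [transpose_sub, transpose_one, hsymm]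
  have hI : (1 - M) * (1 - M) = 1 - M := by
    rw [sub_mul, mul_sub, mul_sub, hidem]; simp
  rw [dotProduct_mulVec, ← mulVec_transpose, hT, mulVec_mulVec, hI]

/-- **Signal-plus-noise bias simplification, overparameterized regime.** With
`P = (θuvᵀ + A)†` written via Meyer's rank-one update (overparameterized form),
`β*ᵀ A P Z_tst = −(θ'ξ/(θγ₂)) β*ᵀ A p₂ v_tstᵀ` for `Z_tst = θ'uv_tstᵀ`. -/
theorem spn_bias_simplification_overparam
    (d n m : ℕ) (hd : 0 < d) (hn : 0 < n) (hm : 0 < m)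
    (θ θ' : ℝ) (hθ : θ ≠ 0)
    (A : Matrix (Fin d) (Fin n) ℝ) (u : Fin d → ℝ) (v : Fin n → ℝ)
    (vtst : Fin m → ℝ)
    (Adag : Matrix (Fin n) (Fin d) ℝ)
    (hp1 : A * Adag * A = A)
    (hp2 : Adag * A * Adag = Adag)
    (hp3 : (A * Adag)ᵀ = A * Adag)
    (hp4 : (Adag * A)ᵀ = Adag * A)
    (h : Fin d → ℝ) (hh : h = v ᵥ* Adag)
    (k : Fin n → ℝ) (hk : k = Adag *ᵥ u)
    (s : Fin d → ℝ) (hs : s = ((1 : Matrix (Fin d) (Fin d) ℝ) - A * Adag) *ᵥ u)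
    (ξ : ℝ) (hξdef : ξ = 1 + θ * (v ⬝ᵥ (Adag *ᵥ u)))
    (γ₂ : ℝ) (hγdef : γ₂ = θ ^ 2 * (s ⬝ᵥ s) * (h ⬝ᵥ h) + ξ ^ 2)
    (p₂ : Fin n → ℝ) (hp₂ : p₂ = -(θ ^ 2 * (s ⬝ᵥ s) / ξ) • (Adag *ᵥ h) - θ • k)
    (q₂ : Fin d → ℝ) (hq₂ : q₂ = -(θ * (h ⬝ᵥ h) / ξ) • s - h)
    (hξ : ξ ≠ 0) (hγ : γ₂ ≠ 0)
    (Ztst : Matrix (Fin d) (Fin m) ℝ) (hZtst : Ztst = θ' • vecMulVec u vtst)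
    (P : Matrix (Fin n) (Fin d) ℝ)
    (hP : P = Adag + (θ / ξ) • vecMulVec (Adag *ᵥ h) s - (ξ / γ₂) • vecMulVec p₂ q₂) :
    ∀ βstar : Fin d → ℝ,
      βstar ᵥ* (A * P * Ztst)
        = (-(θ' * ξ / (θ * γ₂)) * ((βstar ᵥ* A) ⬝ᵥ p₂)) • vtst := by
  have hsu : s ⬝ᵥ u = s ⬝ᵥ s := by
    rw [hs]
    exact residual_dotProduct_self _ hp3 (by rw [← Matrix.mul_assoc, hp1]) u
  have hhu : h ⬝ᵥ u = (ξ - 1) / θ := by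
    rw [hh, ← dotProduct_mulVec, hξdef]
    field_simp
    ring
  have hqu : q₂ ⬝ᵥ u = -(γ₂ - ξ) / (θ * ξ) := by
    rw [hq₂, sub_dotProduct, smul_dotProduct, hsu, hhu, hγdef, smul_eq_mul]
    field_simp
    ring
  have hPu : P *ᵥ u = (-(ξ / (θ * γ₂))) • p₂ := by
    have hfirst : Adag *ᵥ u + (θ / ξ * (s ⬝ᵥ s)) • (Adag *ᵥ h) = (-(1 / θ)) • p₂ := by
      rw [hp₂, hk]
      ext i
      simp only [Pi.add_apply, Pi.sub_apply, Pi.smul_apply, smul_eq_mul]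
      field_simp
      ring
    have hexpand : P *ᵥ u = Adag *ᵥ u + (θ / ξ * (s ⬝ᵥ s)) • (Adag *ᵥ h)
        - (ξ / γ₂ * (q₂ ⬝ᵥ u)) • p₂ := by
      rw [hP, sub_mulVec, add_mulVec, smul_mulVec, smul_mulVec, vecMulVec_mulVec,
        vecMulVec_mulVec, hsu, op_smul_eq_smul, op_smul_eq_smul, smul_smul, smul_smul]
    rw [hexpand, hfirst, hqu, ← sub_smul]
    congr 1
    field_simp
    ring
  intro βstar
  rw [hZtst, Matrix.mul_smul, mul_vecMulVec, vecMul_smul, vecMul_vecMulVec, ← mulVec_mulVec, hPu,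
    dotProduct_mulVec, dotProduct_smul, smul_smul, smul_eq_mul]
  congr 1
  ring
end
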